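/- arXiv:2304.00522 — 2 statements merged into one kernel-verified Lean document; each statement's English description precedes it below -/
import Mathlib

section
/- Let V be a real inner product space, let θ > 0, Θ > 0, k ≥ 0 and K be real numbers, and let a, b ∈ V. Then (Θ/θ − 1)·(k/θ)·‖a‖² + (θ/Θ − 1)·(K/Θ)·‖b‖² + ⟨(K/Θ)·b − (k/θ)·a, b − a⟩ ≥ Θ·(k/θ²)·‖a − b‖² + 2·(k/θ²)·(Θ − θ)·⟨a − b, b⟩ + (k/θ − K/Θ)·⟨a − b, b⟩ + (k/θ − K/Θ)·((Θ − θ)/Θ)·‖b‖². -/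
open RealInnerProductSpace

/-- The pointwise inequality (A2) from the proof of the
temperature-gradient estimate (Lemma AL1) of the paper. -/
theorem statement8
    {V : Type*} [NormedAddCommGroup V] [InnerProductSpace ℝ V]
    (θ Θ k K : ℝ) (hθ : 0 < θ) (hΘ : 0 < Θ) (hk : 0 ≤ k)
    (a b : V) :
    (Θ / θ - 1) * (k / θ) * ‖a‖ ^ 2 + (θ / Θ - 1) * (K / Θ) * ‖b‖ ^ 2 +
        ⟪(K / Θ) • b - (k / θ) • a, b - a⟫ ≥
      Θ * (k / θ ^ 2) * ‖a - b‖ ^ 2 + 2 * (k / θ ^ 2) * (Θ - θ) * ⟪a - b, b⟫ +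
        (k / θ - K / Θ) * ⟪a - b, b⟫ + (k / θ - K / Θ) * ((Θ - θ) / Θ) * ‖b‖ ^ 2 := by
  -- Substituting `a = (a - b) + b`, the two sides have the same coefficients of `‖a - b‖ ^ 2` and of
  -- `⟪a - b, b⟫`; only a nonnegative multiple of `‖b‖ ^ 2` is left over.
  have hgap : 0 ≤ k * (Θ - θ) ^ 2 / (θ ^ 2 * Θ) * ‖b‖ ^ 2 := by positivity
  obtain ⟨d, rfl⟩ : ∃ d, a = d + b := ⟨a - b, by simp⟩
  have hneg : b - (d + b) = -d := by abel
  have hinner : ⟪(K / Θ) • b - (k / θ) • (d + b), b - (d + b)⟫ =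
      k / θ * ‖d‖ ^ 2 + (k / θ - K / Θ) * ⟪d, b⟫ := by
    rw [hneg, inner_neg_right, inner_sub_left, real_inner_smul_left, real_inner_smul_left,
      inner_add_left, real_inner_self_eq_norm_sq, real_inner_comm d b]
    ring
  rw [hinner, add_sub_cancel_right, norm_add_sq_real, ge_iff_le, ← sub_nonneg]
  convert hgap using 1
  field_simp
  ring
end

section
/- Let a > 0 and let P : ℝ → ℝ be continuously differentiable on [0,∞) with P(0) = 0, P'(Z) > 0 for all Z ≥ 0, and (5/3)P(Z) − P'(Z)Z > 0 for all Z > 0; let 𝒮 : (0,∞) → ℝ be differentiable with 𝒮'(Z) = −(3/2)((5/3)P(Z) − P'(Z)Z)/Z². Define p(ρ,θ) = θ^{5/2} P(ρ θ^{−3/2}) + (a/3) θ⁴, e(ρ,θ) = (3/2)(θ^{5/2}/ρ) P(ρ θ^{−3/2}) + (a/ρ) θ⁴, s(ρ,θ) = 𝒮(ρ θ^{−3/2}) + (4a/3) θ³/ρ, and for ρ, θ, r, Θ > 0 and u, U, B, H ∈ ℝ³ define the relative energy E(ρ,θ,u,B | r,Θ,U,H) = (1/2)ρ‖u − U‖²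 + (1/2)‖B − H‖² + ρ e(ρ,θ) − Θ(ρ s(ρ,θ) − r s(r,Θ)) − (e(r,Θ) − Θ s(r,Θ) + p(r,Θ)/r)(ρ − r) − r e(r,Θ). Then E(ρ,θ,u,B | r,Θ,U,H) ≥ 0 for all ρ, θ, r, Θ > 0 and all u, U, B, H ∈ ℝ³, and E(ρ,θ,u,B | r,Θ,U,H) = 0 if and only if (ρ,θ,u,B) = (r,Θ,U,H). -/
/-!
With `Θ` fixed, put `F ρ θ = ρ e(ρ,θ) - Θ ρ s(ρ,θ)` (the ballistic free energy). By Gibbs' relation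
the coefficient `e - Θ s + p / r` at `(r,Θ)` is `∂F/∂ρ (r,Θ)`, so apart from the two squares the
relative energy splits as
`[F ρ θ - F ρ Θ] + [F ρ Θ - F r Θ - ∂F/∂ρ (r,Θ) (ρ - r)]`.

The substitution `θ = t²`, `Θ = T²` turns all fractional powers into integer ones. Write `Z` for the
argument of `P` and `S`. The first bracket is the sum of a radiation part, a nonnegative polynomial,
and a gas part whose `t`-derivative is `(9/2) t² (5/3 P(Z) - P'(Z) Z) (t² - Θ)`, so that it is
uniquely minimized at `t = T` (`gas_thermal`). In the second bracket the radiation terms cancel, and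
up to the factor `T⁵` there remains the tangent gap of `G(Z) = 3/2 P(Z) - Z S(Z)`, which is strictly
convex because `G'(Z) = 5/2 P(Z)/Z - S(Z)` has derivative `P'(Z)/Z > 0` (`gas_density`).
-/

/-- A function on `(0,∞)` whose derivative is negative before `c` and positive after `c` attains its
minimum at `c` only. -/
theorem lt_of_deriv_sign {f f' : ℝ → ℝ} {c : ℝ} (hc : 0 < c)
    (hf : ∀ x, 0 < x → HasDerivAt f (f' x) x)
    (hneg : ∀ x, 0 < x → x < c → f' x < 0) (hpos : ∀ x, c < x → 0 < f' x)
    {x : ℝ} (hx : 0 < x) (hxc : x ≠ c) : f c < f x := by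
  rcases lt_or_gt_of_ne hxc with h | h
  · obtain ⟨y, hy, hslope⟩ := exists_hasDerivAt_eq_slope f f' h
      (fun z hz => (hf z (hx.trans_le hz.1)).continuousAt.continuousWithinAt)
      (fun z hz => hf z (hx.trans hz.1))
    have h1 := hneg y (hx.trans hy.1) hy.2
    rw [hslope, div_neg_iff] at h1
    rcases h1 with h1 | h1 <;> linarith [h1.1, h1.2]
  · obtain ⟨y, hy, hslope⟩ := exists_hasDerivAt_eq_slope f f' h
      (fun z hz => (hf z (hc.trans_le hz.1)).continuousAt.continuousWithinAt)
      (fun z hz => hf z (hc.trans hz.1))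
    have h1 := hpos y hy.1
    rw [hslope, div_pos_iff] at h1
    rcases h1 with h1 | h1 <;> linarith [h1.1, h1.2]

/-- Strict minimality in the temperature `t²` at `t = T` of the gas part of the ballistic free
energy, at fixed density. -/
theorem gas_thermal {P P' S : ℝ → ℝ}
    (hderiv : ∀ Z, 0 < Z → HasDerivAt P (P' Z) Z)
    (hstruct : ∀ Z, 0 < Z → 0 < 5 / 3 * P Z - P' Z * Z)
    (hS : ∀ Z, 0 < Z → HasDerivAt S (-(3 / 2) * (5 / 3 * P Z - P' Z * Z) / Z ^ 2) Z)
    {ρ T t : ℝ} (hρ : 0 < ρ) (hT : 0 < T) (ht : 0 < t) (hne : t ≠ T) :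
    3 / 2 * T ^ 5 * P (ρ / T ^ 3) - T ^ 2 * (ρ * S (ρ / T ^ 3)) <
      3 / 2 * t ^ 5 * P (ρ / t ^ 3) - T ^ 2 * (ρ * S (ρ / t ^ 3)) := by
  have hD : ∀ x : ℝ, 0 < x → 0 < 9 / 2 * x ^ 2 *
      (5 / 3 * P (ρ / x ^ 3) - P' (ρ / x ^ 3) * (ρ / x ^ 3)) := fun x hx =>
    mul_pos (by positivity) (hstruct _ (by positivity))
  refine lt_of_deriv_sign (f := fun t => 3 / 2 * t ^ 5 * P (ρ / t ^ 3)
      - T ^ 2 * (ρ * S (ρ / t ^ 3)))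
    (f' := fun x => 9 / 2 * x ^ 2 *
      (5 / 3 * P (ρ / x ^ 3) - P' (ρ / x ^ 3) * (ρ / x ^ 3)) * (x ^ 2 - T ^ 2))
    hT ?_ ?_ ?_ ht hne
  · intro x hx
    have hZ : 0 < ρ / x ^ 3 := by positivity
    have hq : HasDerivAt (fun x : ℝ => ρ / x ^ 3) (-(3 * ρ / x ^ 4)) x := by
      have := (hasDerivAt_const x ρ).div (hasDerivAt_pow 3 x) (by positivity)
      refine this.congr_deriv ?_
      push_cast
      field_simp
      ring
    have h1 := ((hasDerivAt_pow 5 x).const_mul (3 / 2)).mul ((hderiv _ hZ).comp x hq)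
    have h2 := (((hS _ hZ).comp x hq).const_mul ρ).const_mul (T ^ 2)
    refine (h1.sub h2).congr_deriv ?_
    simp only [Function.comp]
    push_cast
    field_simp
    ring
  · intro x hx hxT
    exact mul_neg_of_pos_of_neg (hD x hx) (by nlinarith)
  · intro x hx
    exact mul_pos (hD x (hT.trans hx)) (by nlinarith)

/-- The strict tangent-line inequality for `G(Z) = 3/2 P(Z) - Z S(Z)`, the isothermal free energy of
the gas in rescaled density. -/
theorem gas_density {P P' S : ℝ → ℝ}
    (hderiv : ∀ Z, 0 < Z → HasDerivAt P (P' Z) Z)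
    (hP'pos : ∀ Z, 0 < Z → 0 < P' Z)
    (hS : ∀ Z, 0 < Z → HasDerivAt S (-(3 / 2) * (5 / 3 * P Z - P' Z * Z) / Z ^ 2) Z)
    {W Z : ℝ} (hW : 0 < W) (hZ : 0 < Z) (hne : Z ≠ W) :
    3 / 2 * P W - W * S W + (5 / 2 * P W / W - S W) * (Z - W) < 3 / 2 * P Z - Z * S Z := by
  have hG' : ∀ x, 0 < x →
      HasDerivAt (fun x => 5 / 2 * P x / x - S x) (P' x / x) x := by
    intro x hx
    have h := (((hderiv x hx).const_mul (5 / 2)).div (hasDerivAt_id x) hx.ne').sub (hS x hx)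
    refine h.congr_deriv ?_
    simp only [id]
    field_simp
    ring
  have hmono : StrictMonoOn (fun x => 5 / 2 * P x / x - S x) (Set.Ioi 0) := by
    refine strictMonoOn_of_deriv_pos (convex_Ioi 0)
      (fun x hx => (hG' x hx).continuousAt.continuousWithinAt) ?_
    intro x hx
    rw [interior_Ioi] at hx
    rw [(hG' x hx).deriv]
    exact div_pos (hP'pos x hx) hx
  have key := lt_of_deriv_sign
    (f := fun x => 3 / 2 * P x - x * S x - (5 / 2 * P W / W - S W) * x)
    (f' := fun x => (5 / 2 * P x / x - S x) - (5 / 2 * P W / W - S W)) hW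
    (fun x hx => by
      have h := (((hderiv x hx).const_mul (3 / 2)).sub ((hasDerivAt_id x).mul (hS x hx))).sub
        ((hasDerivAt_id x).const_mul (5 / 2 * P W / W - S W))
      refine h.congr_deriv ?_
      simp only [id]
      field_simp
      ring)
    (fun x hx hxW => sub_neg.2 (hmono hx hW hxW))
    (fun x hx => sub_pos.2 (hmono hW (hW.trans hx) hx)) hZ hne
  linarith

theorem sq_rpow_five_halves {t : ℝ} (ht : 0 < t) : (t ^ 2) ^ ((5 : ℝ) / 2) = t ^ 5 := by
  rw [← Real.rpow_natCast, ← Real.rpow_natCast, ← Real.rpow_mul ht.le]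
  norm_num

theorem mul_sq_rpow_neg_three_halves (ρ : ℝ) {t : ℝ} (ht : 0 < t) :
    ρ * (t ^ 2) ^ (-(3 : ℝ) / 2) = ρ / t ^ 3 := by
  have h : (t ^ 2) ^ (-(3 : ℝ) / 2) = (t ^ 3)⁻¹ := by
    rw [← Real.rpow_natCast, ← Real.rpow_natCast, ← Real.rpow_mul ht.le, ← Real.rpow_neg ht.le]
    norm_num
  rw [h, div_eq_mul_inv]

/-- Nonnegativity of the relative energy and the
characterization of its zero set (Bregman-divergence property), under the full
structural hypotheses (c1)–(c6) of the paper. -/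
theorem statement14
    (a : ℝ) (ha : 0 < a)
    (P P' : ℝ → ℝ)
    (hderiv : ∀ Z ∈ Set.Ici (0 : ℝ), HasDerivAt P (P' Z) Z)
    (hcont : ContinuousOn P' (Set.Ici (0 : ℝ)))
    (hP0 : P 0 = 0)
    (hP'pos : ∀ Z ∈ Set.Ici (0 : ℝ), 0 < P' Z)
    (hstruct : ∀ Z ∈ Set.Ioi (0 : ℝ), 0 < 5 / 3 * P Z - P' Z * Z)
    (S : ℝ → ℝ)
    (hS : ∀ Z ∈ Set.Ioi (0 : ℝ),
      HasDerivAt S (-(3 / 2) * (5 / 3 * P Z - P' Z * Z) / Z ^ 2) Z)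
    (p e s : ℝ → ℝ → ℝ)
    (hp : ∀ ρ θ : ℝ, p ρ θ =
      θ ^ ((5 : ℝ) / 2) * P (ρ * θ ^ (-(3 : ℝ) / 2)) + a / 3 * θ ^ 4)
    (he : ∀ ρ θ : ℝ, e ρ θ =
      3 / 2 * (θ ^ ((5 : ℝ) / 2) / ρ) * P (ρ * θ ^ (-(3 : ℝ) / 2)) + a / ρ * θ ^ 4)
    (hs : ∀ ρ θ : ℝ, s ρ θ =
      S (ρ * θ ^ (-(3 : ℝ) / 2)) + 4 * a / 3 * θ ^ 3 / ρ)
    (E : ℝ → ℝ → EuclideanSpace ℝ (Fin 3) → EuclideanSpace ℝ (Fin 3) →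
      ℝ → ℝ → EuclideanSpace ℝ (Fin 3) → EuclideanSpace ℝ (Fin 3) → ℝ)
    (hE : ∀ (ρ θ : ℝ) (u B : EuclideanSpace ℝ (Fin 3)) (r Θ : ℝ)
        (U H : EuclideanSpace ℝ (Fin 3)),
      E ρ θ u B r Θ U H =
        1 / 2 * ρ * ‖u - U‖ ^ 2 + 1 / 2 * ‖B - H‖ ^ 2 + ρ * e ρ θ -
          Θ * (ρ * s ρ θ - r * s r Θ) -
          (e r Θ - Θ * s r Θ + p r Θ / r) * (ρ - r) - r * e r Θ) :
    ∀ (ρ θ r Θ : ℝ), 0 < ρ → 0 < θ → 0 < r → 0 < Θ →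
      ∀ (u U B H : EuclideanSpace ℝ (Fin 3)),
        0 ≤ E ρ θ u B r Θ U H ∧
        (E ρ θ u B r Θ U H = 0 ↔ (ρ = r ∧ θ = Θ ∧ u = U ∧ B = H)) := by
  intro ρ θ r Θ hρ hθ hr hΘ u U B H
  obtain ⟨t, ht, rfl⟩ : ∃ t : ℝ, 0 < t ∧ t ^ 2 = θ :=
    ⟨√θ, Real.sqrt_pos.2 hθ, Real.sq_sqrt hθ.le⟩
  obtain ⟨T, hT, rfl⟩ : ∃ T : ℝ, 0 < T ∧ T ^ 2 = Θ :=
    ⟨√Θ, Real.sqrt_pos.2 hΘ, Real.sq_sqrt hΘ.le⟩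
  have hd : ∀ Z, 0 < Z → HasDerivAt P (P' Z) Z := fun Z hZ => hderiv Z hZ.le
  -- the thermal bracket of the gas, the radiation, and the density bracket of the gas
  set A := (3 / 2 * t ^ 5 * P (ρ / t ^ 3) - T ^ 2 * (ρ * S (ρ / t ^ 3))) -
    (3 / 2 * T ^ 5 * P (ρ / T ^ 3) - T ^ 2 * (ρ * S (ρ / T ^ 3))) with hA
  set R := a / 3 * ((t ^ 2 - T ^ 2) ^ 2 * (3 * t ^ 4 + 2 * t ^ 2 * T ^ 2 + T ^ 4)) with hR
  set C := 3 / 2 * P (ρ / T ^ 3) - ρ / T ^ 3 * S (ρ / T ^ 3) -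
    (3 / 2 * P (r / T ^ 3) - r / T ^ 3 * S (r / T ^ 3) +
      (5 / 2 * P (r / T ^ 3) / (r / T ^ 3) - S (r / T ^ 3)) * (ρ / T ^ 3 - r / T ^ 3)) with hC
  have hsplit : E ρ (t ^ 2) u B r (T ^ 2) U H =
      1 / 2 * ρ * ‖u - U‖ ^ 2 + 1 / 2 * ‖B - H‖ ^ 2 + A + R + T ^ 5 * C := by
    rw [hE, he, he, hs, hs, hp, sq_rpow_five_halves ht, sq_rpow_five_halves hT,
      mul_sq_rpow_neg_three_halves _ ht, mul_sq_rpow_neg_three_halves _ hT,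
      hA, hR, hC]
    field_simp
    ring
  have hA_pos : t ≠ T → 0 < A := fun h => sub_pos.2 (gas_thermal hd hstruct hS hρ hT ht h)
  have hA0 : 0 ≤ A := by
    by_cases h : t = T
    · rw [hA, h, sub_self]
    · exact (hA_pos h).le
  have hR0 : 0 ≤ R := by positivity
  have hC_pos : ρ ≠ r → 0 < C := fun h => sub_pos.2 <|
    gas_density hd (fun Z hZ => hP'pos Z hZ.le) hS (by positivity) (by positivity)
      fun h' => h ((div_left_inj' (by positivity)).1 h')
  have hC0 : 0 ≤ C := by
    by_cases h : ρ = r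
    · rw [hC, h]
      exact le_of_eq (by ring)
    · exact (hC_pos h).le
  have hTC : 0 ≤ T ^ 5 * C := by positivity
  have hu : 0 ≤ 1 / 2 * ρ * ‖u - U‖ ^ 2 := by positivity
  have hB : 0 ≤ 1 / 2 * ‖B - H‖ ^ 2 := by positivity
  rw [hsplit]
  refine ⟨by linarith, fun h0 => ?_, ?_⟩
  · refine ⟨?_, ?_, ?_, ?_⟩
    · by_contra h
      have : 0 < T ^ 5 * C := mul_pos (by positivity) (hC_pos h)
      linarith
    · by_contra h
      have := hA_pos fun h' => h (by rw [h'])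
      linarith
    · by_contra h
      have : 0 < ‖u - U‖ := norm_pos_iff.2 (sub_ne_zero.2 h)
      have : 0 < 1 / 2 * ρ * ‖u - U‖ ^ 2 := by positivity
      linarith
    · by_contra h
      have : 0 < ‖B - H‖ := norm_pos_iff.2 (sub_ne_zero.2 h)
      have : 0 < 1 / 2 * ‖B - H‖ ^ 2 := by positivity
      linarith
  · rintro ⟨rfl, htT, rfl, rfl⟩
    obtain rfl : t = T := (pow_left_inj₀ ht.le hT.le two_ne_zero).1 htT
    rw [hA, hR, hC]
    simp
end
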